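/- arXiv:2510.16426 — 7 statements merged into one kernel-verified Lean document; each statement's English description precedes it below -/
import Mathlib

section
/- Let L be a left Leibniz algebra over a field F of characteristic zero that is BMS-complete. Then Z^l(L) = Leib(L). -/
/-- The Leibniz kernel `Leib(L)`: the span of all squares `[x,x]`. -/
def leibnizKernel (F : Type*) [Field F] (L : Type*) [AddCommGroup L] [Module F L]
    (b : L →ₗ[F] L →ₗ[F] L) : Submodule F L :=
  Submodule.span F (Set.range fun x : L => b x x)

/-- If a left Leibniz algebra `L` over a field of characteristic zero is
BMS-complete (the quotient Lie algebra `L/Leib(L)` has trivial center, and every derivation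
`D` of `L` satisfies `Im(D - L_x) ⊆ Leib(L)` for some `x ∈ L`), then `Z^l(L) = Leib(L)`. -/
theorem stmt_6 (F : Type*) [Field F] [CharZero F] (L : Type*) [AddCommGroup L] [Module F L]
    (b : L →ₗ[F] L →ₗ[F] L)
    (hleib : ∀ x y z : L, b x (b y z) = b y (b x z) + b (b x y) z)
    -- trivial center of the quotient Lie algebra L/Leib(L)
    (hZ : ∀ x : L, (∀ y : L, b x y ∈ leibnizKernel F L b) → x ∈ leibnizKernel F L b)
    -- every derivation agrees with a left multiplication modulo Leib(L)
    (hComplete : ∀ D : L →ₗ[F] L, (∀ x y : L, D (b x y) = b (D x) y + b x (D y)) →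
      ∃ a : L, ∀ y : L, D y - b a y ∈ leibnizKernel F L b) :
    ∀ x : L, (∀ y : L, b x y = 0) ↔ x ∈ leibnizKernel F L b := by
  intro x
  constructor
  · intro h
    apply hZ
    intro y
    rw [h y]
    exact Submodule.zero_mem _
  · intro hx y
    have hle : leibnizKernel F L b ≤ LinearMap.ker b := by
      refine Submodule.span_le.mpr ?_
      rintro _ ⟨u, rfl⟩
      simp only [SetLike.mem_coe, LinearMap.mem_ker]
      ext z
      have h := hleib u u z
      simpa using h
    have h := LinearMap.mem_ker.mp (hle hx)
    rw [h, LinearMap.zero_apply]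
end

section
/- Let L be a finite-dimensional left Leibniz algebra over a field F of characteristic zero that is BMS-complete. A bilinear map f : L × L → L is a biderivation of L if and only if there exist linear maps φ, ψ : L → L, a left biderivation p : L × L → L with values in Leib(L), and a right biderivation q : L × L → L with values in Leib(L), such that f(x,y) = [φ(x),y] + p(x,y) = [ψ(y),x] + q(x,y) for all x, y ∈ L. -/
/-- A linear family of derivations is, modulo the Leibniz kernel, given by left
multiplications depending linearly on the parameter. -/
theorem exists_linear_lift (F : Type*) [Field F] (L : Type*) [AddCommGroup L] [Module F L]
    (b g : L →ₗ[F] L →ₗ[F] L) (K : Submodule F L)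
    (h : ∀ x, ∃ a : L, ∀ y : L, g x y - b a y ∈ K) :
    ∃ φ : L →ₗ[F] L, ∀ x y, g x y - b (φ x) y ∈ K := by
  let T : L →ₗ[F] L →ₗ[F] (L ⧸ K) := b.compr₂ K.mkQ
  let S : L →ₗ[F] L →ₗ[F] (L ⧸ K) := g.compr₂ K.mkQ
  have hS : ∀ x, S x ∈ LinearMap.range T := by
    intro x
    obtain ⟨a, ha⟩ := h x
    refine ⟨a, ?_⟩
    ext y
    exact ((Submodule.Quotient.eq K).2 (ha y)).symm
  obtain ⟨φ, hφ⟩ := Module.projective_lifting_property T.rangeRestrict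
    (S.codRestrict (LinearMap.range T) hS) T.surjective_rangeRestrict
  refine ⟨φ, fun x y => ?_⟩
  have h1 := congrArg Subtype.val (LinearMap.congr_fun hφ x)
  have h2 : T (φ x) y = S x y := LinearMap.congr_fun h1 y
  exact (Submodule.Quotient.eq K).1 h2.symm

/-- Let `L` be a finite-dimensional left Leibniz algebra over a field of
characteristic zero which is BMS-complete. A bilinear map `f : L × L → L` is a biderivation
iff there exist linear maps `φ, ψ : L → L`, a left biderivation `p` and a right biderivation
`q`, both with values in `Leib(L)`, such that
`f(x,y) = [φ(x),y] + p(x,y) = [ψ(y),x] + q(x,y)` for all `x, y ∈ L`. -/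
theorem stmt_7 (F : Type*) [Field F] [CharZero F] (L : Type*) [AddCommGroup L] [Module F L]
    [FiniteDimensional F L]
    (b : L →ₗ[F] L →ₗ[F] L)
    (hleib : ∀ x y z : L, b x (b y z) = b y (b x z) + b (b x y) z)
    -- trivial center of the quotient Lie algebra L/Leib(L)
    (hZ : ∀ x : L, (∀ y : L, b x y ∈ leibnizKernel F L b) → x ∈ leibnizKernel F L b)
    -- every derivation agrees with a left multiplication modulo Leib(L)
    (hComplete : ∀ D : L →ₗ[F] L, (∀ x y : L, D (b x y) = b (D x) y + b x (D y)) →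
      ∃ a : L, ∀ y : L, D y - b a y ∈ leibnizKernel F L b)
    (f : L →ₗ[F] L →ₗ[F] L) :
    -- `f` is a biderivation: `f(x,-)` and `f(-,x)` are derivations for every `x`
    ((∀ x y z : L, f x (b y z) = b (f x y) z + b y (f x z)) ∧
     (∀ x y z : L, f (b x y) z = b (f x z) y + b x (f y z)))
    ↔
    ∃ (φ ψ : L →ₗ[F] L) (p q : L →ₗ[F] L →ₗ[F] L),
      (∀ x y : L, p x y ∈ leibnizKernel F L b) ∧
      -- `p` is a left biderivation
      (∀ x y z : L, p x (b y z) = b (p x y) z + b y (p x z)) ∧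
      (∀ x y : L, q x y ∈ leibnizKernel F L b) ∧
      -- `q` is a right biderivation
      (∀ x y z : L, q (b x y) z = b x (q y z) + b (q x z) y) ∧
      (∀ x y : L, f x y = b (φ x) y + p x y) ∧
      (∀ x y : L, f x y = b (ψ y) x + q x y) := by
  constructor
  · rintro ⟨h1, h2⟩
    obtain ⟨φ, hφ⟩ := exists_linear_lift F L b f (leibnizKernel F L b)
      (fun x => hComplete (f x) (h1 x))
    obtain ⟨ψ, hψ⟩ := exists_linear_lift F L b f.flip (leibnizKernel F L b)
      (fun z => hComplete (f.flip z) (fun x y => h2 x y z))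
    refine ⟨φ, ψ, f - b.comp φ, f - (b.comp ψ).flip, hφ, ?_, fun x y => hψ y x, ?_, ?_, ?_⟩
    · intro x y z
      simp only [LinearMap.sub_apply, LinearMap.comp_apply, map_sub, h1, hleib (φ x) y z]
      abel
    · intro x y z
      simp only [LinearMap.sub_apply, LinearMap.comp_apply, LinearMap.flip_apply, map_sub, h2,
        hleib (ψ z) x y]
      abel
    · intro x y
      simp
    · intro x y
      simp
  · rintro ⟨φ, ψ, p, q, -, hp, -, hq, hfp, hfq⟩
    constructor
    · intro x y z
      simp only [hfp, hp, hleib (φ x) y z, map_add, LinearMap.add_apply]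
      abel
    · intro x y z
      simp only [hfq, hq, hleib (ψ z) x y, map_add, LinearMap.add_apply]
      abel
end

section
/- Let L be a finite-dimensional left Leibniz algebra over a field F of characteristic zero that is AKS-complete. A bilinear map f : L × L → L is a biderivation of L if and only if there exist linear maps φ, ψ : L → L such that f(x,y) = [φ(x),y] = [ψ(y),x] for all x, y ∈ L. -/
theorem lift_aux {F L M : Type*} [Field F] [AddCommGroup L] [Module F L]
    [AddCommGroup M] [Module F M] (b f : L →ₗ[F] M)
    (h : ∀ x, ∃ a, f x = b a) : ∃ φ : L →ₗ[F] L, ∀ x, f x = b (φ x) := by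
  obtain ⟨g, hg⟩ := b.rangeRestrict.exists_rightInverse_of_surjective b.range_rangeRestrict
  have hm : ∀ x, f x ∈ LinearMap.range b := fun x => by
    obtain ⟨a, ha⟩ := h x
    exact ⟨a, ha.symm⟩
  refine ⟨g ∘ₗ f.codRestrict _ hm, fun x => ?_⟩
  have := congrArg Subtype.val (LinearMap.congr_fun hg (f.codRestrict _ hm x))
  exact this.symm

/-- Let `L` be a finite-dimensional left Leibniz algebra over a field of
characteristic zero which is AKS-complete (`Z(L) = 0` and every derivation is a left
multiplication). A bilinear map `f : L × L → L` is a biderivation iff there exist linear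
maps `φ, ψ : L → L` such that `f(x,y) = [φ(x),y] = [ψ(y),x]` for all `x, y ∈ L`. -/
theorem stmt_8 (F : Type*) [Field F] [CharZero F] (L : Type*) [AddCommGroup L] [Module F L]
    [FiniteDimensional F L]
    (b : L →ₗ[F] L →ₗ[F] L)
    (hleib : ∀ x y z : L, b x (b y z) = b y (b x z) + b (b x y) z)
    -- trivial center
    (hZ : ∀ x : L, (∀ y : L, b x y = 0 ∧ b y x = 0) → x = 0)
    -- every derivation is a left multiplication
    (hComplete : ∀ D : L →ₗ[F] L, (∀ x y : L, D (b x y) = b (D x) y + b x (D y)) →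
      ∃ a : L, ∀ y : L, D y = b a y)
    (f : L →ₗ[F] L →ₗ[F] L) :
    -- `f` is a biderivation: `f(x,-)` and `f(-,x)` are derivations for every `x`
    ((∀ x y z : L, f x (b y z) = b (f x y) z + b y (f x z)) ∧
     (∀ x y z : L, f (b x y) z = b (f x z) y + b x (f y z)))
    ↔
    ∃ φ ψ : L →ₗ[F] L, ∀ x y : L, f x y = b (φ x) y ∧ f x y = b (ψ y) x := by
  constructor
  · rintro ⟨h1, h2⟩
    obtain ⟨φ, hφ⟩ := lift_aux b f (fun x => by
      obtain ⟨a, ha⟩ := hComplete (f x) (h1 x)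
      exact ⟨a, LinearMap.ext ha⟩)
    obtain ⟨ψ, hψ⟩ := lift_aux b f.flip (fun z => by
      obtain ⟨a, ha⟩ := hComplete (f.flip z) (fun x y => h2 x y z)
      exact ⟨a, LinearMap.ext ha⟩)
    exact ⟨φ, ψ, fun x y => ⟨LinearMap.congr_fun (hφ x) y, LinearMap.congr_fun (hψ y) x⟩⟩
  · rintro ⟨φ, ψ, h⟩
    constructor
    · intro x y z
      rw [(h x _).1, (h x y).1, (h x z).1, hleib, add_comm]
    · intro x y z
      rw [(h _ z).2, (h x z).2, (h y z).2, hleib, add_comm]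
end

section
/- Let L be a finite-dimensional complete Lie algebra over a field F of characteristic zero. A bilinear map f : L × L → L is a biderivation of L if and only if there exist linear maps φ, ψ : L → L such that f(x,y) = [φ(x),y] = [x,ψ(y)] for all x, y ∈ L. -/
/-- Let `L` be a finite-dimensional complete Lie algebra over a field of
characteristic zero (trivial center and every derivation is inner). A bilinear map
`f : L × L → L` is a biderivation iff there exist linear maps `φ, ψ : L → L` such that
`f(x,y) = [φ(x),y] = [x,ψ(y)]` for all `x, y ∈ L`. -/
theorem stmt_9 (F : Type*) [Field F] [CharZero F] (L : Type*) [LieRing L] [LieAlgebra F L]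
    [Module.Finite F L]
    -- trivial center
    (hZ : ∀ x : L, (∀ y : L, ⁅x, y⁆ = 0) → x = 0)
    -- every derivation is inner
    (hComplete : ∀ D : L →ₗ[F] L, (∀ x y : L, D ⁅x, y⁆ = ⁅D x, y⁆ + ⁅x, D y⁆) →
      ∃ a : L, ∀ y : L, D y = ⁅a, y⁆)
    (f : L →ₗ[F] L →ₗ[F] L) :
    -- `f` is a biderivation: `f(x,-)` and `f(-,x)` are derivations for every `x`
    ((∀ x y z : L, f x ⁅y, z⁆ = ⁅f x y, z⁆ + ⁅y, f x z⁆) ∧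
     (∀ x y z : L, f ⁅x, y⁆ z = ⁅f x z, y⁆ + ⁅x, f y z⁆))
    ↔
    ∃ φ ψ : L →ₗ[F] L, ∀ x y : L, f x y = ⁅φ x, y⁆ ∧ f x y = ⁅x, ψ y⁆ := by
  have hinj : ∀ a b : L, (∀ y : L, ⁅a, y⁆ = ⁅b, y⁆) → a = b := by
    intro a b h
    refine sub_eq_zero.mp (hZ _ fun y => ?_)
    rw [sub_lie, h y, sub_self]
  constructor
  · rintro ⟨h1, h2⟩
    have e1 : ∀ x : L, ∃ a : L, ∀ y : L, f x y = ⁅a, y⁆ := fun x => hComplete (f x) (h1 x)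
    have e2 : ∀ y : L, ∃ a : L, ∀ x : L, f x y = ⁅a, x⁆ := fun y =>
      hComplete (f.flip y) (fun a b => h2 a b y)
    choose p hp using e1
    choose q hq using e2
    let φ : L →ₗ[F] L :=
      { toFun := p
        map_add' := fun a b => hinj _ _ fun y => by
          rw [← hp, add_lie, ← hp, ← hp, map_add, LinearMap.add_apply]
        map_smul' := fun c a => hinj _ _ fun y => by
          rw [← hp, RingHom.id_apply, smul_lie, ← hp, map_smul, LinearMap.smul_apply] }
    let ψ : L →ₗ[F] L :=
      { toFun := q
        map_add' := fun a b => hinj _ _ fun y => by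
          rw [← hq, add_lie, ← hq, ← hq, map_add]
        map_smul' := fun c a => hinj _ _ fun y => by
          rw [← hq, RingHom.id_apply, smul_lie, ← hq, map_smul] }
    refine ⟨φ, -ψ, fun x y => ⟨hp x y, ?_⟩⟩
    rw [LinearMap.neg_apply, lie_neg, lie_skew]
    exact hq y x
  · rintro ⟨φ, ψ, h⟩
    refine ⟨fun x y z => ?_, fun x y z => ?_⟩
    · rw [(h x _).1, (h x y).1, (h x z).1, leibniz_lie]
    · rw [(h _ z).2, (h x z).2, (h y z).2, lie_lie, ← lie_skew y ⁅x, ψ z⁆]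
      abel
end

section
/- Let L be a left Leibniz algebra over a field F of characteristic zero and let g : L → L be a commuting linear map. Then the bilinear map f : L × L → L defined by f(x,y) = [g(x),y] is a skew-symmetric biderivation of L, i.e. f is a biderivation and f(x,y) = −f(y,x) for all x,y ∈ L. -/
/-- Let `L` be a left Leibniz algebra over a field of characteristic zero
and `g : L → L` a commuting linear map (`[g(x),x] = [x,g(x)] = 0` for all `x`). Then
`f(x,y) = [g(x),y]` is a skew-symmetric biderivation of `L`. -/
theorem stmt_14 (F : Type*) [Field F] [CharZero F] (L : Type*) [AddCommGroup L] [Module F L]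
    (b : L →ₗ[F] L →ₗ[F] L)
    (hleib : ∀ x y z : L, b x (b y z) = b y (b x z) + b (b x y) z)
    (g : L →ₗ[F] L)
    (hg : ∀ x : L, b (g x) x = 0 ∧ b x (g x) = 0) :
    -- `f(x,y) = [g(x),y]` is a biderivation: `f(x,-)` and `f(-,y)` are derivations
    (∀ x y z : L, b (g x) (b y z) = b (b (g x) y) z + b y (b (g x) z)) ∧
    (∀ x y z : L, b (g (b x z)) y = b (b (g x) y) z + b x (b (g z) y)) ∧
    -- and it is skew-symmetric
    (∀ x y : L, b (g x) y = - b (g y) x) := by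
  have skew : ∀ x y : L, b (g x) y = - b (g y) x := by
    intro x y
    have h := (hg (x + y)).1
    simp only [map_add, LinearMap.add_apply, (hg x).1, (hg y).1, zero_add, add_zero] at h
    first
      | exact eq_neg_of_add_eq_zero_left h
      | exact eq_neg_of_add_eq_zero_right h
  have der : ∀ x y z : L, b (g x) (b y z) = b (b (g x) y) z + b y (b (g x) z) := by
    intro x y z
    rw [hleib, add_comm]
  refine ⟨der, ?_, skew⟩
  intro x y z
  rw [skew (b x z) y, der, skew x y, skew z y]
  simp only [map_neg, LinearMap.neg_apply]
  abel
end

section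
/- Let L be a left Leibniz algebra over a field F of characteristic zero and let g : L → L be a skew-commuting linear map. Then the bilinear map f : L × L → L defined by f(x,y) = [g(x),y] is a symmetric biderivation of L, i.e. f is a biderivation and f(x,y) = f(y,x) for all x,y ∈ L. -/
/-- Let `L` be a left Leibniz algebra over a field of characteristic zero
and `g : L → L` a skew-commuting linear map (`[g(x),y] = [g(y),x]` for all `x, y`). Then
`f(x,y) = [g(x),y]` is a symmetric biderivation of `L`. -/
theorem stmt_15 (F : Type*) [Field F] [CharZero F] (L : Type*) [AddCommGroup L] [Module F L]
    (b : L →ₗ[F] L →ₗ[F] L)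
    (hleib : ∀ x y z : L, b x (b y z) = b y (b x z) + b (b x y) z)
    (g : L →ₗ[F] L)
    (hg : ∀ x y : L, b (g x) y = b (g y) x) :
    -- `f(x,y) = [g(x),y]` is a biderivation: `f(x,-)` and `f(-,y)` are derivations
    (∀ x y z : L, b (g x) (b y z) = b (b (g x) y) z + b y (b (g x) z)) ∧
    (∀ x y z : L, b (g (b x z)) y = b (b (g x) y) z + b x (b (g z) y)) ∧
    -- and it is symmetric
    (∀ x y : L, b (g x) y = b (g y) x) := by
  refine ⟨fun x y z => ?_, fun x y z => ?_, hg⟩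
  · rw [hleib (g x) y z, add_comm]
  · rw [hg (b x z) y, hleib (g y) x z, hg y x, hg y z, add_comm]
end

section
/- Let L be a finite-dimensional left Leibniz algebra over a field F of characteristic zero that is AKS-complete. A symmetric bilinear map f : L × L → L (i.e. f(x,y) = f(y,x) for all x,y) is a biderivation of L if and only if there exists a skew-commuting linear map g : L → L such that f(x,y) = [g(x),y] for all x, y ∈ L. -/
/-- Let `L` be a finite-dimensional left Leibniz algebra over a field of
characteristic zero which is AKS-complete. A symmetric bilinear map `f : L × L → L` is a
biderivation iff there exists a skew-commuting linear map `g : L → L` with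
`f(x,y) = [g(x),y]` for all `x, y ∈ L`. -/
theorem stmt_16 (F : Type*) [Field F] [CharZero F] (L : Type*) [AddCommGroup L] [Module F L]
    [FiniteDimensional F L]
    (b : L →ₗ[F] L →ₗ[F] L)
    (hleib : ∀ x y z : L, b x (b y z) = b y (b x z) + b (b x y) z)
    -- trivial center
    (hZ : ∀ x : L, (∀ y : L, b x y = 0 ∧ b y x = 0) → x = 0)
    -- every derivation is a left multiplication
    (hComplete : ∀ D : L →ₗ[F] L, (∀ x y : L, D (b x y) = b (D x) y + b x (D y)) →
      ∃ a : L, ∀ y : L, D y = b a y)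
    (f : L →ₗ[F] L →ₗ[F] L)
    (hsymm : ∀ x y : L, f x y = f y x) :
    -- `f` is a biderivation: `f(x,-)` and `f(-,x)` are derivations for every `x`
    ((∀ x y z : L, f x (b y z) = b (f x y) z + b y (f x z)) ∧
     (∀ x y z : L, f (b x y) z = b (f x z) y + b x (f y z)))
    ↔
    ∃ g : L →ₗ[F] L, (∀ x y : L, b (g x) y = b (g y) x) ∧ ∀ x y : L, f x y = b (g x) y := by
  constructor
  · rintro ⟨h1, -⟩
    have hf : ∀ x, f x ∈ LinearMap.range b := by
      intro x
      obtain ⟨a, ha⟩ := hComplete (f x) (h1 x)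
      exact ⟨a, LinearMap.ext fun y => (ha y).symm⟩
    obtain ⟨g, hg⟩ := Module.projective_lifting_property b.rangeRestrict
      (f.codRestrict (LinearMap.range b) hf) b.surjective_rangeRestrict
    have hg' : ∀ x, b (g x) = f x := fun x =>
      congrArg Subtype.val (LinearMap.congr_fun hg x)
    refine ⟨g, fun x y => ?_, fun x y => ?_⟩
    · rw [hg', hg', hsymm]
    · rw [hg']
  · rintro ⟨g, -, hfg⟩
    have h1 : ∀ x y z : L, f x (b y z) = b (f x y) z + b y (f x z) := by
      intro x y z
      rw [hfg, hfg, hfg, hleib, add_comm]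
    refine ⟨h1, fun x y z => ?_⟩
    rw [hsymm, h1, hsymm z x, hsymm z y]
end
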